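/- arXiv:1210.8413 — 2 statements merged into one kernel-verified Lean document; each statement's English description precedes it below -/
import Mathlib

section
/- Let K be a field and c, d, q₁, q₂ ∈ Kˣ. Then R(q₁d⁻¹, q₁⁻¹c⁻¹, q₁⁻¹, q₂⁻¹) is isomorphic to R(c, d, q₁, q₂) as K-algebras; an isomorphism is given by x₁ ↦ q₁cd·y₃, x₂ ↦ y₄, x₃ ↦ y₁, x₄ ↦ y₂, where x₁,…,x₄ are the generators of the source and y₁,…,y₄ those of the target. -/
/-- The defining relations of Jordan's ambiskew polynomial ring `R(a,b,p₁,p₂)`,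
with generators `x₁ = ι 0`, `x₂ = ι 1`, `x₃ = ι 2`, `x₄ = ι 3`:
`x₄x₁ = a·x₁x₄`, `x₂x₁ = p₁⁻¹a⁻¹·x₁x₂`, `x₁x₃ = p₁·x₃x₁`, `x₄x₃ = b·x₃x₄`,
`x₂x₃ = p₁b⁻¹·x₃x₂`, `x₂x₄ = p₂·x₄x₂ + (1 - p₂ab)·x₁x₃`. -/
inductive AmbRel (K : Type*) [Field K] (a b p₁ p₂ : K) :
    FreeAlgebra K (Fin 4) → FreeAlgebra K (Fin 4) → Prop
  | r41 : AmbRel K a b p₁ p₂ (FreeAlgebra.ι K 3 * FreeAlgebra.ι K 0)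
      (a • (FreeAlgebra.ι K 0 * FreeAlgebra.ι K 3))
  | r21 : AmbRel K a b p₁ p₂ (FreeAlgebra.ι K 1 * FreeAlgebra.ι K 0)
      ((p₁⁻¹ * a⁻¹) • (FreeAlgebra.ι K 0 * FreeAlgebra.ι K 1))
  | r13 : AmbRel K a b p₁ p₂ (FreeAlgebra.ι K 0 * FreeAlgebra.ι K 2)
      (p₁ • (FreeAlgebra.ι K 2 * FreeAlgebra.ι K 0))
  | r43 : AmbRel K a b p₁ p₂ (FreeAlgebra.ι K 3 * FreeAlgebra.ι K 2)
      (b • (FreeAlgebra.ι K 2 * FreeAlgebra.ι K 3))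
  | r23 : AmbRel K a b p₁ p₂ (FreeAlgebra.ι K 1 * FreeAlgebra.ι K 2)
      ((p₁ * b⁻¹) • (FreeAlgebra.ι K 2 * FreeAlgebra.ι K 1))
  | r24 : AmbRel K a b p₁ p₂ (FreeAlgebra.ι K 1 * FreeAlgebra.ι K 3)
      (p₂ • (FreeAlgebra.ι K 3 * FreeAlgebra.ι K 1) +
        (1 - p₂ * a * b) • (FreeAlgebra.ι K 0 * FreeAlgebra.ι K 2))

/-- Jordan's ambiskew polynomial ring `R(a,b,p₁,p₂)`. -/
abbrev Ambiskew (K : Type*) [Field K] (a b p₁ p₂ : K) := RingQuot (AmbRel K a b p₁ p₂)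

/-- The images of the four free generators in `R(a,b,p₁,p₂)`;
`agen K a b p₁ p₂ i` is the generator `x_{i+1}`. -/
noncomputable def agen (K : Type*) [Field K] (a b p₁ p₂ : K) (i : Fin 4) :
    Ambiskew K a b p₁ p₂ :=
  RingQuot.mkAlgHom K (AmbRel K a b p₁ p₂) (FreeAlgebra.ι K i)

/-!
By the universal property, maps out of `R(a,b,p₁,p₂)` are families in an algebra satisfying the
defining relations. If `y` satisfies those of `R(c,d,q₁,q₂)`, then `(s·y₃, y₄, t·y₁, y₂)` satisfies
those of `R(q₁d⁻¹, q₁⁻¹c⁻¹, q₁⁻¹, q₂⁻¹)` whenever `st = q₁cd`: this is what solving the last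
relation for `y₄y₂` requires of the factor in front of `y₃y₁`. The change of parameters is an
involution sending `q₁cd` to its inverse, so the scales `(q₁cd, 1)` and `(1, (q₁cd)⁻¹)` give the
isomorphism and its inverse.
-/

section

variable {K A : Type*} [Field K] [Semiring A] [Algebra K A] {a b p₁ p₂ s t : K} {x : Fin 4 → A}

/-- A family `x` in a `K`-algebra satisfying the defining relations of `R(a,b,p₁,p₂)`; such
families correspond to the algebra maps out of `R(a,b,p₁,p₂)`. The field names use the paper's
indices, so `x 0` is `x₁`. -/
structure IsAmbiskewFamily (a b p₁ p₂ : K) (x : Fin 4 → A) : Prop where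
  r41 : x 3 * x 0 = a • (x 0 * x 3)
  r21 : x 1 * x 0 = (p₁⁻¹ * a⁻¹) • (x 0 * x 1)
  r13 : x 0 * x 2 = p₁ • (x 2 * x 0)
  r43 : x 3 * x 2 = b • (x 2 * x 3)
  r23 : x 1 * x 2 = (p₁ * b⁻¹) • (x 2 * x 1)
  r24 : x 1 * x 3 = p₂ • (x 3 * x 1) + (1 - p₂ * a * b) • (x 0 * x 2)

theorem isAmbiskewFamily_agen (a b p₁ p₂ : K) :
    IsAmbiskewFamily a b p₁ p₂ (agen K a b p₁ p₂) := by
  constructor <;> simp only [agen, ← map_mul, ← map_smul, ← map_add] <;>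
    exact RingQuot.mkAlgHom_rel K (by constructor)

namespace IsAmbiskewFamily

theorem freeAlgebra_lift_eq (h : IsAmbiskewFamily a b p₁ p₂ x) ⦃u v : FreeAlgebra K (Fin 4)⦄
    (huv : AmbRel K a b p₁ p₂ u v) : FreeAlgebra.lift K x u = FreeAlgebra.lift K x v := by
  cases huv <;> simp only [map_mul, map_smul, map_add, FreeAlgebra.lift_ι_apply]
  exacts [h.r41, h.r21, h.r13, h.r43, h.r23, h.r24]

theorem interchange (ha : a ≠ 0) (hb : b ≠ 0) (hp₁ : p₁ ≠ 0) (hp₂ : p₂ ≠ 0)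
    (hst : s * t = p₁ * a * b) (h : IsAmbiskewFamily a b p₁ p₂ x) :
    IsAmbiskewFamily (p₁ * b⁻¹) (p₁⁻¹ * a⁻¹) p₁⁻¹ p₂⁻¹ ![s • x 2, x 3, t • x 0, x 1] where
  r41 := by
    change x 1 * s • x 2 = (p₁ * b⁻¹) • (s • x 2 * x 1)
    rw [mul_smul_comm, smul_mul_assoc, h.r23, smul_comm]
  r21 := by
    change x 3 * s • x 2 = (p₁⁻¹⁻¹ * (p₁ * b⁻¹)⁻¹) • (s • x 2 * x 3)
    rw [mul_smul_comm, smul_mul_assoc, h.r43]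
    match_scalars
    field_simp
  r13 := by
    change s • x 2 * t • x 0 = p₁⁻¹ • (t • x 0 * s • x 2)
    rw [smul_mul_smul_comm, smul_mul_smul_comm, h.r13]
    match_scalars
    field_simp
  r43 := by
    change x 1 * t • x 0 = (p₁⁻¹ * a⁻¹) • (t • x 0 * x 1)
    rw [mul_smul_comm, smul_mul_assoc, h.r21, smul_comm]
  r23 := by
    change x 3 * t • x 0 = (p₁⁻¹ * (p₁⁻¹ * a⁻¹)⁻¹) • (t • x 0 * x 3)
    rw [mul_smul_comm, smul_mul_assoc, h.r41]
    match_scalars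
    field_simp
  r24 := by
    change x 3 * x 1 = p₂⁻¹ • (x 1 * x 3) +
      (1 - p₂⁻¹ * (p₁ * b⁻¹) * (p₁⁻¹ * a⁻¹)) • (s • x 2 * t • x 0)
    rw [smul_mul_smul_comm, hst, h.r24, h.r13]
    match_scalars <;> field_simp
    ring

theorem interchange_symm (ha : a ≠ 0) (hb : b ≠ 0) (hp₁ : p₁ ≠ 0) (hp₂ : p₂ ≠ 0)
    (hst : s * t = (p₁ * a * b)⁻¹)
    (h : IsAmbiskewFamily (p₁ * b⁻¹) (p₁⁻¹ * a⁻¹) p₁⁻¹ p₂⁻¹ x) :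
    IsAmbiskewFamily a b p₁ p₂ ![s • x 2, x 3, t • x 0, x 1] := by
  have hst' : s * t = p₁⁻¹ * (p₁ * b⁻¹) * (p₁⁻¹ * a⁻¹) := by
    rw [hst]
    field_simp
  convert h.interchange (mul_ne_zero hp₁ (inv_ne_zero hb))
    (mul_ne_zero (inv_ne_zero hp₁) (inv_ne_zero ha)) (inv_ne_zero hp₁) (inv_ne_zero hp₂) hst'
    using 1 <;> field_simp

end IsAmbiskewFamily

namespace Ambiskew

/-- The universal property of `R(a,b,p₁,p₂)`: the algebra map sending its generators to a given
family that satisfies the defining relations. -/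
noncomputable def lift (h : IsAmbiskewFamily a b p₁ p₂ x) : Ambiskew K a b p₁ p₂ →ₐ[K] A :=
  RingQuot.liftAlgHom K ⟨FreeAlgebra.lift K x, h.freeAlgebra_lift_eq⟩

@[simp]
theorem lift_agen (h : IsAmbiskewFamily a b p₁ p₂ x) (i : Fin 4) :
    lift h (agen K a b p₁ p₂ i) = x i := by
  simp [lift, agen]

theorem algHom_ext {f g : Ambiskew K a b p₁ p₂ →ₐ[K] A}
    (h : ∀ i, f (agen K a b p₁ p₂ i) = g (agen K a b p₁ p₂ i)) : f = g :=
  RingQuot.ringQuot_ext' K f g (FreeAlgebra.hom_ext (funext h))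

end Ambiskew

end

/-- `R(q₁d⁻¹, q₁⁻¹c⁻¹, q₁⁻¹, q₂⁻¹) ≅ R(c,d,q₁,q₂)` via
`x₁ ↦ q₁cd·y₃`, `x₂ ↦ y₄`, `x₃ ↦ y₁`, `x₄ ↦ y₂`. -/
theorem ambiskew_iso_four (K : Type*) [Field K] (c d q₁ q₂ : Kˣ) :
    ∃ Φ : Ambiskew K ((q₁ : K) * (d : K)⁻¹) ((q₁ : K)⁻¹ * (c : K)⁻¹) ((q₁ : K)⁻¹) ((q₂ : K)⁻¹)
        ≃ₐ[K] Ambiskew K (c : K) (d : K) (q₁ : K) (q₂ : K),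
      Φ (agen K ((q₁ : K) * (d : K)⁻¹) ((q₁ : K)⁻¹ * (c : K)⁻¹) ((q₁ : K)⁻¹) ((q₂ : K)⁻¹) 0) =
        ((q₁ : K) * (c : K) * (d : K)) • agen K (c : K) (d : K) (q₁ : K) (q₂ : K) 2 ∧
      Φ (agen K ((q₁ : K) * (d : K)⁻¹) ((q₁ : K)⁻¹ * (c : K)⁻¹) ((q₁ : K)⁻¹) ((q₂ : K)⁻¹) 1) =
        agen K (c : K) (d : K) (q₁ : K) (q₂ : K) 3 ∧
      Φ (agen K ((q₁ : K) * (d : K)⁻¹) ((q₁ : K)⁻¹ * (c : K)⁻¹) ((q₁ : K)⁻¹) ((q₂ : K)⁻¹) 2) =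
        agen K (c : K) (d : K) (q₁ : K) (q₂ : K) 0 ∧
      Φ (agen K ((q₁ : K) * (d : K)⁻¹) ((q₁ : K)⁻¹ * (c : K)⁻¹) ((q₁ : K)⁻¹) ((q₂ : K)⁻¹) 3) =
        agen K (c : K) (d : K) (q₁ : K) (q₂ : K) 1 := by
  have hc := c.ne_zero
  have hd := d.ne_zero
  have hq₁ := q₁.ne_zero
  have hq₂ := q₂.ne_zero
  have hscale : (q₁ : K) * c * d ≠ 0 := mul_ne_zero (mul_ne_zero hq₁ hc) hd
  have hy := (isAmbiskewFamily_agen (c : K) d q₁ q₂).interchange hc hd hq₁ hq₂ (mul_one _)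
  have hx := (isAmbiskewFamily_agen ((q₁ : K) * (d : K)⁻¹) ((q₁ : K)⁻¹ * (c : K)⁻¹) (q₁ : K)⁻¹
    (q₂ : K)⁻¹).interchange_symm hc hd hq₁ hq₂ (one_mul _)
  have right_inv : (Ambiskew.lift hy).comp (Ambiskew.lift hx) = AlgHom.id K _ := by
    refine Ambiskew.algHom_ext fun i => ?_
    fin_cases i <;> simp [-mul_inv_rev, hscale]
  have left_inv : (Ambiskew.lift hx).comp (Ambiskew.lift hy) = AlgHom.id K _ := by
    refine Ambiskew.algHom_ext fun i => ?_
    fin_cases i <;> simp [-mul_inv_rev, hscale]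
  refine ⟨AlgEquiv.ofAlgHom (Ambiskew.lift hy) (Ambiskew.lift hx) right_inv left_inv, ?_⟩
  simp
end

section
/- Let K be a field of characteristic 0 and let p, q ∈ Kˣ be roots of unity with p ≠ 1, p ≠ −1, q ≠ 1, q ≠ −1. If the quantum Weyl algebras A_1^p(K) and A_1^q(K) are isomorphic as K-algebras, then p = q or p = q⁻¹. -/
/-- The defining relation of the quantum Weyl algebra `A_1^q(K)`:
`x * y = q • (y * x) + 1`, where `x, y` are the two free generators. -/
inductive WeylRel (K : Type*) [Field K] (q : K) :
    FreeAlgebra K (Fin 2) → FreeAlgebra K (Fin 2) → Prop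
  | rel : WeylRel K q (FreeAlgebra.ι K 0 * FreeAlgebra.ι K 1)
      (q • (FreeAlgebra.ι K 1 * FreeAlgebra.ι K 0) + 1)

/-- The quantum Weyl algebra `A_1^q(K)`. -/
abbrev QuantumWeyl (K : Type*) [Field K] (q : K) := RingQuot (WeylRel K q)

/-- The images of the two free generators in `A_1^q(K)`; `wgen K q 0` is `x`
and `wgen K q 1` is `y`. -/
noncomputable def wgen (K : Type*) [Field K] (q : K) (i : Fin 2) : QuantumWeyl K q :=
  RingQuot.mkAlgHom K (WeylRel K q) (FreeAlgebra.ι K i)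

/-!
For `q ≠ 0, 1`, sending `x` to the matrix with diagonal `(q t, t)` over `K[t, t⁻¹]` extends to an
upper triangular representation of `A_1^q(K)` in which `x` and `y` do not commute. Pull it back to
`A_1^p(K)` along an isomorphism. The relation `x [x, y] = p [x, y] x`, read in the upper right
corner, says that the two diagonal entries of the image of `x` have ratio `p`. As every character
is determined by its value at `x`, the first diagonal entry arises from the second, `e(x)`, by the
substitution `t ↦ q t`. Now `e(x)` is a unit, hence of the form `c t ^ k`, so that `q ^ k = p`; and
`k = ±1` because `e` is onto.
-/

open LaurentPolynomial

theorem exists_eq_C_mul_T_of_isUnit {R : Type*} [CommRing R] [IsDomain R] {f : R[T;T⁻¹]}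
    (hf : IsUnit f) : ∃ (c : Rˣ) (k : ℤ), f = C (c : R) * T k := by
  obtain ⟨g, hfg⟩ := hf.exists_right_inv
  obtain ⟨n, f', hf'⟩ := exists_T_pow f
  obtain ⟨m, g', hg'⟩ := exists_T_pow g
  have f'_dvd : f' ∣ Polynomial.X ^ (n + m) := by
    refine ⟨g', Polynomial.toLaurent_injective ?_⟩
    rw [map_mul, hf', hg', Polynomial.toLaurent_X_pow, Nat.cast_add, T_add]
    linear_combination -(T n * T m) * hfg
  obtain ⟨i, -, u, hu⟩ := ((dvd_prime_pow Polynomial.prime_X _).1 f'_dvd).imp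
    fun _ h ↦ h.imp_right Associated.symm
  obtain ⟨c, hc, hcu⟩ := Polynomial.isUnit_iff.1 u.isUnit
  refine ⟨hc.unit, i - n, (isUnit_T n).mul_right_cancel ?_⟩
  rw [mul_T_assoc, sub_add_cancel, ← hf', ← hu, ← hcu, map_mul, Polynomial.toLaurent_X_pow,
    Polynomial.toLaurent_C, mul_comm, IsUnit.unit_spec]

theorem isUnit_of_forall_algHom_map_T_eq {R : Type*} [CommSemiring R] [Nontrivial R] {k : ℤ}
    (h : ∀ f g : R[T;T⁻¹] →ₐ[R] AddMonoidAlgebra R (ZMod k.natAbs), f (T k) = g (T k) →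
      f (T 1) = g (T 1)) :
    IsUnit k := by
  let f := AddMonoidAlgebra.mapDomainAlgHom R R (Int.castAddHom (ZMod k.natAbs))
  let g := AddMonoidAlgebra.mapDomainAlgHom R R (0 : ℤ →+ ZMod k.natAbs)
  have hk : ((k : ℤ) : ZMod k.natAbs) = 0 := by simp [ZMod.intCast_zmod_eq_zero_iff_dvd]
  have hfg : f (T 1) = g (T 1) := h f g (by simp [f, g, T, hk, -single_eq_C_mul_T])
  have h_one : AddMonoidAlgebra.single (1 : ZMod k.natAbs) (1 : R) = .single 0 1 := by
    simpa [f, g, T, -single_eq_C_mul_T] using hfg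
  have one_eq_zero : ((1 : ℤ) : ZMod k.natAbs) = 0 := by
    simpa using AddMonoidAlgebra.single_left_injective one_ne_zero h_one
  rw [ZMod.intCast_zmod_eq_zero_iff_dvd] at one_eq_zero
  exact isUnit_of_dvd_one (Int.natAbs_dvd.1 one_eq_zero)

section Dilation

variable {R : Type*} [CommSemiring R]

/-- The substitution `T ↦ q T`, an endomorphism of the Laurent polynomial ring. -/
noncomputable def dilation (q : Rˣ) : R[T;T⁻¹] →ₐ[R] R[T;T⁻¹] :=
  AddMonoidAlgebra.lift R R[T;T⁻¹] ℤ
    { toFun n := C ((q ^ n.toAdd : Rˣ) : R) * T n.toAdd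
      map_one' := by simp
      map_mul' m n := by
        simp only [toAdd_mul, zpow_add, Units.val_mul, map_mul, T_add]
        ring }

theorem dilation_C_mul_T (q : Rˣ) (c : R) (n : ℤ) :
    dilation q (C c * T n) = C (c * ((q ^ n : Rˣ) : R)) * T n := by
  rw [← single_eq_C_mul_T, dilation, AddMonoidAlgebra.lift_single, smul_eq_C_mul, map_mul,
    mul_assoc]
  rfl

theorem dilation_T_one (q : Rˣ) : dilation q (T 1) = q • (T 1 : R[T;T⁻¹]) := by
  simpa [Units.smul_def, smul_eq_C_mul, -single_eq_C_mul_T] using dilation_C_mul_T q 1 1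

theorem eq_zpow_of_dilation_eq_smul {q c : Rˣ} {p : R} {k : ℤ}
    (h : dilation q (C (c : R) * T k) = p • (C (c : R) * T k)) : p = ((q ^ k : Rˣ) : R) := by
  rw [dilation_C_mul_T, smul_eq_C_mul, ← mul_assoc, ← map_mul, ← single_eq_C_mul_T,
    ← single_eq_C_mul_T] at h
  refine c.isUnit.mul_left_cancel ?_
  rw [AddMonoidAlgebra.single_right_injective h, mul_comm]

end Dilation

/-- The `i`-th diagonal entry, as a character of the algebra of upper triangular matrices. -/
def diagEntry {K R n : Type*} [CommSemiring K] [Semiring R] [Algebra K R] [Fintype n]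
    [LinearOrder n] (i : n) :
    Matrix.blockTriangularSubalgebra K R (id : n → n) →ₐ[K] R where
  toFun M := M.1 i i
  map_one' := by simp
  map_mul' M N := by
    refine (Matrix.mul_apply).trans (Finset.sum_eq_single i (fun j _ hj ↦ ?_) (by simp))
    rcases hj.lt_or_gt with hlt | hgt
    · rw [M.2 hlt, zero_mul]
    · rw [N.2 hgt, mul_zero]
  map_zero' := rfl
  map_add' _ _ := rfl
  commutes' r := by simp [Matrix.algebraMap_matrix_apply]

/-- The matrix `!![a, b; 0, d]`, as an element of the algebra of upper triangular matrices. -/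
def upperTriangularOfEntries {K R : Type*} [CommSemiring K] [Semiring R] [Algebra K R]
    (a b d : R) : Matrix.blockTriangularSubalgebra K R (id : Fin 2 → Fin 2) :=
  ⟨!![a, b; 0, d], fun i j hij ↦ by fin_cases i <;> fin_cases j <;> first | rfl | simp at hij⟩

theorem mul_commutator_of_mul_eq_smul_add_one {K A : Type*} [CommRing K] [Ring A] [Algebra K A]
    {q : K} {x y : A} (h : x * y = q • (y * x) + 1) :
    x * (x * y - y * x) = q • ((x * y - y * x) * x) := by
  have hz : x * y - y * x = (q - 1) • (y * x) + 1 := by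
    rw [h]
    module
  have hxyx : x * (y * x) = q • (y * x * x) + x := by
    rw [← mul_assoc, h, add_mul, smul_mul_assoc, one_mul]
  rw [hz, mul_add, mul_smul_comm, hxyx, add_mul, smul_mul_assoc, mul_one, one_mul]
  module

theorem diagEntry_zero_eq_smul_of_not_commute {K R : Type*} [CommRing K] [CommRing R]
    [NoZeroDivisors R] [Algebra K R] {q : K}
    {X Y : Matrix.blockTriangularSubalgebra K R (id : Fin 2 → Fin 2)}
    (h : X * Y = q • (Y * X) + 1) (hXY : ¬ Commute X Y) :
    diagEntry 0 X = q • diagEntry 1 X := by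
  set Z := X * Y - Y * X with hZ
  have diag_Z (i : Fin 2) : Z.1 i i = 0 := by
    change diagEntry i Z = 0
    rw [hZ, map_sub, map_mul, map_mul, mul_comm, sub_self]
  have hZ01 : Z.1 0 1 ≠ 0 := by
    intro hZ01
    refine hXY (sub_eq_zero.1 (Subtype.ext (Matrix.ext fun i j ↦ ?_)))
    fin_cases i <;> fin_cases j
    exacts [diag_Z 0, hZ01, Z.2 zero_lt_one, diag_Z 1]
  have corner := congr(($(mul_commutator_of_mul_eq_smul_add_one h)).1 0 1)
  rw [← hZ] at corner
  refine mul_right_cancel₀ hZ01 ?_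
  change X.1 0 0 * Z.1 0 1 = (q • X.1 1 1) * Z.1 0 1
  simpa [Matrix.mul_apply, Fin.sum_univ_two, diag_Z, mul_comm] using corner

namespace QuantumWeyl

variable {K : Type*} [Field K] {p q : K}

theorem wgen_relation (q : K) :
    wgen K q 0 * wgen K q 1 = q • (wgen K q 1 * wgen K q 0) + 1 := by
  simpa [wgen] using RingQuot.mkAlgHom_rel K (WeylRel.rel (K := K) (q := q))

theorem adjoin_range_wgen (q : K) : Algebra.adjoin K (Set.range (wgen K q)) = ⊤ := by
  have range_eq : Set.range (wgen K q) =
      RingQuot.mkAlgHom K (WeylRel K q) '' Set.range (FreeAlgebra.ι K) := by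
    rw [← Set.range_comp]
    rfl
  rw [range_eq, ← AlgHom.map_adjoin, FreeAlgebra.adjoin_range_ι, Algebra.map_top,
    AlgHom.range_eq_top]
  exact RingQuot.mkAlgHom_surjective K _

section Ring

variable {A : Type*} [Ring A] [Algebra K A]

/-- The algebra map out of `A_1^q(K)` determined by a pair `x, y` satisfying its relation. -/
noncomputable def lift (x y : A) (h : x * y = q • (y * x) + 1) : QuantumWeyl K q →ₐ[K] A :=
  RingQuot.liftAlgHom K ⟨FreeAlgebra.lift K ![x, y], by rintro _ _ ⟨⟩; simpa using h⟩

theorem lift_wgen_zero (x y : A) (h : x * y = q • (y * x) + 1) : lift x y h (wgen K q 0) = x := by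
  simp [lift, wgen]

theorem lift_wgen_one (x y : A) (h : x * y = q • (y * x) + 1) : lift x y h (wgen K q 1) = y := by
  simp [lift, wgen]

theorem map_relation (f : QuantumWeyl K q →ₐ[K] A) :
    f (wgen K q 0) * f (wgen K q 1) = q • (f (wgen K q 1) * f (wgen K q 0)) + 1 := by
  simpa using congr(f $(wgen_relation q))

theorem commute_map_of_commute_map_wgen {f : QuantumWeyl K q →ₐ[K] A}
    (h : Commute (f (wgen K q 0)) (f (wgen K q 1))) (a b : QuantumWeyl K q) :
    Commute (f a) (f b) := by
  have commute_of_wgen {c : A} (hc : ∀ i, Commute c (f (wgen K q i))) (a : QuantumWeyl K q) :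
      Commute c (f a) := by
    have ha : f a ∈ Algebra.adjoin K (f '' Set.range (wgen K q)) := by
      rw [← AlgHom.map_adjoin, adjoin_range_wgen]
      exact ⟨a, trivial, rfl⟩
    refine Algebra.commute_of_mem_adjoin_of_forall_mem_commute ha ?_
    rintro _ ⟨_, ⟨i, rfl⟩, rfl⟩
    exact hc i
  refine commute_of_wgen (fun i ↦ (commute_of_wgen (fun j ↦ ?_) a).symm) b
  fin_cases i <;> fin_cases j
  exacts [.refl _, h, h.symm, .refl _]

end Ring

section CommRing

variable {B : Type*} [CommRing B] [Algebra K B]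

theorem map_wgen_zero_mul (f : QuantumWeyl K q →ₐ[K] B) :
    f (wgen K q 0) * ((1 - q) • f (wgen K q 1)) = 1 := by
  rw [mul_smul_comm, sub_smul, one_smul, sub_eq_iff_eq_add']
  exact (map_relation f).trans (by rw [mul_comm (f (wgen K q 1))])

theorem isUnit_map_wgen_zero (f : QuantumWeyl K q →ₐ[K] B) : IsUnit (f (wgen K q 0)) :=
  .of_mul_eq_one _ (map_wgen_zero_mul f)

theorem algHom_ext_of_map_wgen_zero {f g : QuantumWeyl K q →ₐ[K] B}
    (h : f (wgen K q 0) = g (wgen K q 0)) : f = g := by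
  have h_one : f (wgen K q 1) = g (wgen K q 1) := by
    have hf := map_wgen_zero_mul f
    have hg := map_wgen_zero_mul g
    rw [h] at hf
    simp only [Algebra.smul_def] at hf hg
    linear_combination g (wgen K q 1) * hf - f (wgen K q 1) * hg
  refine AlgHom.ext_of_adjoin_eq_top (adjoin_range_wgen q) ?_
  rintro _ ⟨i, rfl⟩
  fin_cases i
  exacts [h, h_one]

theorem character_relation (hq : q ≠ 1) (u : Bˣ) :
    (u : B) * ((1 - q)⁻¹ • ↑u⁻¹) = q • (((1 - q)⁻¹ • ↑u⁻¹) * (u : B)) + 1 := by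
  have h : (1 - q)⁻¹ = q * (1 - q)⁻¹ + 1 := by
    have h_sub : 1 - q ≠ 0 := sub_ne_zero.2 hq.symm
    field_simp
    ring
  rw [mul_smul_comm, smul_mul_assoc, u.mul_inv, u.inv_mul, smul_smul]
  nth_rw 1 [h]
  rw [add_smul, one_smul]

theorem nonempty_algHom_iff [Nontrivial B] : Nonempty (QuantumWeyl K q →ₐ[K] B) ↔ q ≠ 1 := by
  refine ⟨?_, fun hq ↦ ⟨lift _ _ (character_relation hq 1)⟩⟩
  rintro ⟨f⟩ rfl
  simpa using map_wgen_zero_mul f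

/-- The upper triangular representation of `A_1^q(K)` whose diagonal consists of the characters
`x ↦ v` and `x ↦ u`. The corner `1` in the image of `y` respects the defining relation exactly
because `v = q u`. -/
noncomputable def triangularRep (hq : q ≠ 1) {u v : Bˣ} (huv : (v : B) = q • (u : B)) :
    QuantumWeyl K q →ₐ[K] Matrix.blockTriangularSubalgebra K B (id : Fin 2 → Fin 2) :=
  lift (upperTriangularOfEntries v 0 u)
    (upperTriangularOfEntries ((1 - q)⁻¹ • ↑v⁻¹) 1 ((1 - q)⁻¹ • ↑u⁻¹)) <| by
    refine Subtype.ext (Matrix.ext fun i j ↦ ?_)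
    fin_cases i <;> fin_cases j
    · simpa [upperTriangularOfEntries, Matrix.mul_apply] using character_relation hq v
    · simp [upperTriangularOfEntries, Matrix.mul_apply, huv]
    · simp [upperTriangularOfEntries, Matrix.mul_apply]
    · simpa [upperTriangularOfEntries, Matrix.mul_apply] using character_relation hq u

theorem diagEntry_zero_triangularRep (hq : q ≠ 1) {u v : Bˣ} (huv : (v : B) = q • (u : B)) :
    diagEntry 0 (triangularRep hq huv (wgen K q 0)) = v := by
  rw [triangularRep, lift_wgen_zero]
  rfl

theorem diagEntry_one_triangularRep (hq : q ≠ 1) {u v : Bˣ} (huv : (v : B) = q • (u : B)) :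
    diagEntry 1 (triangularRep hq huv (wgen K q 0)) = u := by
  rw [triangularRep, lift_wgen_zero]
  rfl

theorem diagEntry_zero_comp_triangularRep (hq : q ≠ 1) {u v : Bˣ} (huv : (v : B) = q • (u : B))
    {f : B →ₐ[K] B} (hf : f u = v) :
    (diagEntry 0).comp (triangularRep hq huv) =
      f.comp ((diagEntry 1).comp (triangularRep hq huv)) :=
  algHom_ext_of_map_wgen_zero <| by
    simp only [AlgHom.comp_apply, diagEntry_zero_triangularRep, diagEntry_one_triangularRep, hf]

theorem not_commute_triangularRep [Nontrivial B] (hq : q ≠ 1) {u v : Bˣ}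
    (huv : (v : B) = q • (u : B)) :
    ¬ Commute (triangularRep hq huv (wgen K q 0)) (triangularRep hq huv (wgen K q 1)) := by
  rw [triangularRep, lift_wgen_zero, lift_wgen_one]
  intro h
  have corner : (v : B) = u := by
    simpa [upperTriangularOfEntries, Matrix.mul_apply] using congr(($h.eq).1 0 1)
  have smul_one_eq_zero : (1 - q) • (1 : B) = 0 := by
    rw [← u.mul_inv, ← smul_mul_assoc, sub_smul, one_smul, ← huv, corner, sub_self, zero_mul]
  exact hq (sub_eq_zero.1 ((smul_eq_zero_iff_left one_ne_zero).1 smul_one_eq_zero)).symm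

end CommRing

theorem eq_or_mul_eq_one_of_algEquiv (φ : QuantumWeyl K p ≃ₐ[K] QuantumWeyl K q) (hq₀ : q ≠ 0)
    (hq₁ : q ≠ 1) : p = q ∨ p * q = 1 := by
  lift q to Kˣ using hq₀.isUnit
  let t : K[T;T⁻¹]ˣ := (isUnit_T 1).unit
  let ρ := triangularRep hq₁ (u := t) (v := q • t) rfl
  let ψ := ρ.comp φ.toAlgHom
  let e := (diagEntry 1).comp ψ
  have diagEntry_ρ : (diagEntry 0).comp ρ = (dilation q).comp ((diagEntry 1).comp ρ) :=
    diagEntry_zero_comp_triangularRep hq₁ _ (dilation_T_one q)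
  have hψ : ¬ Commute (ψ (wgen K p 0)) (ψ (wgen K p 1)) := fun h ↦
    not_commute_triangularRep hq₁ _ <| by
      simpa [ψ] using commute_map_of_commute_map_wgen h (φ.symm (wgen K q 0)) (φ.symm (wgen K q 1))
  obtain ⟨c, k, hk⟩ := exists_eq_C_mul_T_of_isUnit (isUnit_map_wgen_zero e)
  have hpq : p = ((q ^ k : Kˣ) : K) := by
    refine eq_zpow_of_dilation_eq_smul (c := c) ?_
    rw [← hk]
    exact congr($diagEntry_ρ (φ (wgen K p 0))).symm.trans
      (diagEntry_zero_eq_smul_of_not_commute (map_relation ψ) hψ)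
  have k_isUnit : IsUnit k := by
    refine isUnit_of_forall_algHom_map_T_eq (R := K) fun f g hfg ↦ ?_
    have comp_eq : f.comp e = g.comp e := algHom_ext_of_map_wgen_zero <| by
      simp only [AlgHom.comp_apply, hk, map_mul, hfg, C_eq_algebraMap, AlgHom.commutes]
    have he : e (φ.symm (wgen K q 0)) = T 1 := by
      simp [e, ψ, ρ, diagEntry_one_triangularRep, t]
    simpa [he] using congr($comp_eq (φ.symm (wgen K q 0)))
  rcases Int.isUnit_iff.1 k_isUnit with rfl | rfl
  · simp [hpq]
  · simp [hpq]

end QuantumWeyl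

theorem quantumWeyl_iso_root_general {K : Type*} [Field K] {p q : K}
    (h : Nonempty (QuantumWeyl K p ≃ₐ[K] QuantumWeyl K q)) : p = q ∨ p * q = 1 := by
  obtain ⟨φ⟩ := h
  have one_iff : p = 1 ↔ q = 1 := by
    rw [← not_iff_not, ← ne_eq, ← QuantumWeyl.nonempty_algHom_iff (B := K), ← ne_eq,
      ← QuantumWeyl.nonempty_algHom_iff (B := K)]
    exact (φ.arrowCongr .refl).nonempty_congr
  by_cases hq₁ : q = 1
  · exact .inl ((one_iff.2 hq₁).trans hq₁.symm)
  by_cases hq₀ : q = 0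
  · by_cases hp₀ : p = 0
    · exact .inl (hp₀.trans hq₀.symm)
    · rw [eq_comm, mul_comm]
      exact QuantumWeyl.eq_or_mul_eq_one_of_algEquiv φ.symm hp₀ (mt one_iff.1 hq₁)
  · exact QuantumWeyl.eq_or_mul_eq_one_of_algEquiv φ hq₀ hq₁

/-- for `p, q` roots of unity, not equal to `±1`,
`A_1^p(K) ≅ A_1^q(K)` implies `p = q` or `p = q⁻¹`. -/
theorem quantumWeyl_iso_root (K : Type*) [Field K] [CharZero K] (p q : Kˣ)
    (hp : ∃ n : ℕ, 0 < n ∧ p ^ n = 1) (hq : ∃ n : ℕ, 0 < n ∧ q ^ n = 1)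
    (hp1 : (p : K) ≠ 1) (hp2 : (p : K) ≠ -1) (hq1 : (q : K) ≠ 1) (hq2 : (q : K) ≠ -1)
    (h : Nonempty (QuantumWeyl K (p : K) ≃ₐ[K] QuantumWeyl K (q : K))) :
    p = q ∨ p = q⁻¹ := by
  simpa only [Units.ext_iff, eq_inv_iff_mul_eq_one, Units.val_mul, Units.val_one] using
    quantumWeyl_iso_root_general h
end
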